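/- As $N \to \infty$, $\sqrt{N}\,(\Psi_N(0) - \Psi_N(0-)) \to \sqrt{3/(4\pi)}$; that is, the jump of $\Psi_N$ at the origin is asymptotic to $\sqrt{3/(2N)}\,\varphi(0) = \sqrt{3/(4\pi N)}$. -/

import Mathlib

open MeasureTheory ProbabilityTheory Filter

noncomputable section

/-- `D_N = ∑ X_i`. -/
def DN {Ω : Type*} (X : ℕ → Ω → ℝ) (N : ℕ) (ω : Ω) : ℝ := ∑ i ∈ Finset.range N, X i ω

/-- `T_N = ∑ X_i²`. -/
def TN {Ω : Type*} (X : ℕ → Ω → ℝ) (N : ℕ) (ω : Ω) : ℝ := ∑ i ∈ Finset.range N, (X i ω) ^ 2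

/-- `W_N = D_N / √T_N` if `T_N > 0`, else `0`. -/
def WN {Ω : Type*} (X : ℕ → Ω → ℝ) (N : ℕ) (ω : Ω) : ℝ :=
  if 0 < TN X N ω then DN X N ω / Real.sqrt (TN X N ω) else 0

/-- The standard normal density `φ`. -/
def stdPhi (x : ℝ) : ℝ := Real.exp (-x ^ 2 / 2) / Real.sqrt (2 * Real.pi)

/-- The standard normal distribution function `Φ`. -/
def stdCDF (x : ℝ) : ℝ := ∫ t in Set.Iic x, stdPhi t

/-- The oscillatory term `Λ_N(w)`. -/
def Lambda (N : ℕ) (w : ℝ) : ℝ :=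
  -Real.sqrt (3 / 2) * stdPhi w *
    ∑ n ∈ Finset.range (N + 1),
      3 / Real.sqrt (Real.pi * N) * Real.exp (-(9 / N) * ((n : ℝ) - N / 3) ^ 2) *
        (Int.fract (w * Real.sqrt (2 * n)) - 1 / 2)

/-- The expansion `Ψ_N`: for `w ≥ 0` it is `Φ(w) + N^{-1/2} Λ_N(w)`, and for `w > 0` one sets
`Ψ_N(-w) = 1 - Ψ_N(w-)`, where `Ψ_N(w-)` denotes the left limit at `w`. -/
def Psi (N : ℕ) (w : ℝ) : ℝ :=
  if 0 ≤ w then stdCDF w + Lambda N w / Real.sqrt N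
  else 1 - Function.leftLim (fun x ↦ stdCDF x + Lambda N x / Real.sqrt N) (-w)

open Topology

lemma continuous_stdPhi : Continuous stdPhi := by
  unfold stdPhi
  fun_prop

lemma integrable_stdPhi : Integrable stdPhi := by
  unfold stdPhi
  refine ((integrable_exp_neg_mul_sq (b := 1 / 2) (by norm_num)).div_const
    (Real.sqrt (2 * Real.pi))).congr ?_
  filter_upwards with x
  ring_nf

lemma stdCDF_zero : stdCDF 0 = 1 / 2 := by
  have h : ∫ t in Set.Iic (0 : ℝ), stdPhi t = ∫ t in Set.Ioi (0 : ℝ), stdPhi t := by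
    have h := integral_comp_neg_Iic (0 : ℝ) stdPhi
    rw [neg_zero] at h
    rw [← h]
    simp [stdPhi]
  have hpos : Real.sqrt (2 * Real.pi) ≠ 0 := by positivity
  have hg := integral_gaussian_Ioi (1 / 2)
  have harg : Real.pi / (1 / 2) = 2 * Real.pi := by ring
  rw [harg] at hg
  rw [stdCDF, h]
  simp only [stdPhi]
  rw [integral_div]
  have hfun : ∀ t : ℝ, Real.exp (-t ^ 2 / 2) = Real.exp (-(1 / 2) * t ^ 2) := fun t ↦ by ring_nf
  simp only [hfun]
  rw [hg]
  field_simp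

lemma continuous_stdCDF : Continuous stdCDF := by
  have h : stdCDF = fun x ↦ stdCDF 0 + ∫ t in (0 : ℝ)..x, stdPhi t := by
    funext x
    rw [← intervalIntegral.integral_Iic_sub_Iic integrable_stdPhi.integrableOn
      integrable_stdPhi.integrableOn]
    simp [stdCDF]
  rw [h]
  exact continuous_const.add
    (intervalIntegral.continuous_primitive (fun a b ↦ integrable_stdPhi.intervalIntegrable) 0)

/-- The weights of the discretized Gaussian in `Lambda`. -/
def gaussWeight (N n : ℕ) : ℝ :=
  3 / Real.sqrt (Real.pi * N) * Real.exp (-(9 / N) * ((n : ℝ) - N / 3) ^ 2)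

/-- The point of the lattice `(ℤ - N / 3) / √N` just above `y`. -/
def latticeCeil (N : ℕ) (y : ℝ) : ℝ :=
  ((⌈(N : ℝ) / 3 + Real.sqrt N * y⌉ : ℝ) - N / 3) / Real.sqrt N

/-- The Gaussian density with variance `1 / 18`. -/
def gaussDensity (x : ℝ) : ℝ := 3 / Real.sqrt Real.pi * Real.exp (-9 * x ^ 2)

lemma measurable_latticeCeil (N : ℕ) : Measurable (latticeCeil N) := by
  unfold latticeCeil
  fun_prop

lemma continuous_gaussDensity : Continuous gaussDensity := by
  unfold gaussDensity
  fun_prop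

lemma integral_gaussDensity : ∫ x, gaussDensity x = 1 := by
  simp only [gaussDensity]
  rw [integral_const_mul, integral_gaussian, Real.sqrt_div Real.pi_pos.le,
    show (9 : ℝ) = 3 ^ 2 by norm_num, Real.sqrt_sq (by norm_num)]
  field_simp

lemma le_latticeCeil {N : ℕ} (hN : 0 < N) (y : ℝ) : y ≤ latticeCeil N y := by
  have hs : 0 < Real.sqrt N := by positivity
  rw [latticeCeil, le_div_iff₀ hs]
  linarith [Int.le_ceil ((N : ℝ) / 3 + Real.sqrt N * y)]

lemma latticeCeil_le {N : ℕ} (hN : 0 < N) (y : ℝ) : latticeCeil N y ≤ y + 1 / Real.sqrt N := by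
  have hs : 0 < Real.sqrt N := by positivity
  rw [latticeCeil, div_le_iff₀ hs, add_mul, one_div, inv_mul_cancel₀ hs.ne']
  linarith [Int.ceil_lt_add_one ((N : ℝ) / 3 + Real.sqrt N * y)]

lemma gaussDensity_latticeCeil_le {N : ℕ} (hN : 0 < N) (y : ℝ) :
    gaussDensity (latticeCeil N y) ≤
      3 / Real.sqrt Real.pi * (Real.exp 9 * Real.exp (-(9 / 2) * y ^ 2)) := by
  have h₁ := le_latticeCeil hN y
  have h₂ := latticeCeil_le hN y
  have h₃ : 1 / Real.sqrt N ≤ 1 := by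
    rw [div_le_one (by positivity)]
    exact Real.one_le_sqrt.2 (by exact_mod_cast hN)
  rw [gaussDensity, ← Real.exp_add]
  gcongr
  nlinarith [sq_nonneg (2 * latticeCeil N y - y)]

lemma tendsto_sqrt_natCast : Tendsto (fun N : ℕ ↦ Real.sqrt N) atTop atTop :=
  Real.tendsto_sqrt_atTop.comp tendsto_natCast_atTop_atTop

lemma tendsto_latticeCeil (y : ℝ) : Tendsto (fun N ↦ latticeCeil N y) atTop (𝓝 y) := by
  have h : Tendsto (fun N : ℕ ↦ y + 1 / Real.sqrt N) atTop (𝓝 y) := by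
    simpa using tendsto_sqrt_natCast.inv_tendsto_atTop.const_add y
  refine tendsto_of_tendsto_of_tendsto_of_le_of_le' tendsto_const_nhds h ?_ ?_
  · filter_upwards [eventually_gt_atTop 0] with N hN using le_latticeCeil hN y
  · filter_upwards [eventually_gt_atTop 0] with N hN using latticeCeil_le hN y

lemma integrable_gaussDensity_latticeCeil {N : ℕ} (hN : 0 < N) :
    Integrable fun y ↦ gaussDensity (latticeCeil N y) := by
  refine Integrable.mono' (((integrable_exp_neg_mul_sq (b := 9 / 2) (by norm_num)).const_mul
    (Real.exp 9)).const_mul (3 / Real.sqrt Real.pi))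
    (continuous_gaussDensity.measurable.comp (measurable_latticeCeil N)).aestronglyMeasurable ?_
  filter_upwards with y
  rw [Real.norm_of_nonneg (by unfold gaussDensity; positivity)]
  exact gaussDensity_latticeCeil_le hN y

lemma sum_gaussWeight_eq {N : ℕ} (hN : 0 < N) :
    ∑ n ∈ Finset.range (N + 1), gaussWeight N n =
      ∫ y in (-1 - (N : ℝ) / 3) / Real.sqrt N..((N : ℝ) - N / 3) / Real.sqrt N,
        gaussDensity (latticeCeil N y) := by
  have hs : 0 < Real.sqrt N := by positivity
  have h := intervalIntegral.sum_integral_adjacent_intervals (μ := volume)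
    (f := fun y ↦ gaussDensity (latticeCeil N y))
    (a := fun n : ℕ ↦ ((n : ℝ) - 1 - N / 3) / Real.sqrt N) (n := N + 1)
    (fun k _ ↦ (integrable_gaussDensity_latticeCeil hN).intervalIntegrable)
  have h₀ : (((0 : ℕ) : ℝ) - 1 - N / 3) / Real.sqrt N = (-1 - (N : ℝ) / 3) / Real.sqrt N := by
    push_cast; ring
  have h₁ : (((N + 1 : ℕ) : ℝ) - 1 - N / 3) / Real.sqrt N = ((N : ℝ) - N / 3) / Real.sqrt N := by
    push_cast; ring
  rw [h₀, h₁] at h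
  rw [← h]
  refine Finset.sum_congr rfl fun n _ ↦ ?_
  have hle : ((n : ℝ) - 1 - N / 3) / Real.sqrt N ≤
      (((n + 1 : ℕ) : ℝ) - 1 - N / 3) / Real.sqrt N := by
    gcongr
    omega
  have hcongr : ∫ y in ((n : ℝ) - 1 - N / 3) / Real.sqrt N..
        (((n + 1 : ℕ) : ℝ) - 1 - N / 3) / Real.sqrt N, gaussDensity (latticeCeil N y) =
      ∫ _ in ((n : ℝ) - 1 - N / 3) / Real.sqrt N..
        (((n + 1 : ℕ) : ℝ) - 1 - N / 3) / Real.sqrt N,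
        gaussDensity (((n : ℝ) - N / 3) / Real.sqrt N) := by
    refine intervalIntegral.integral_congr_ae (Eventually.of_forall fun y hy ↦ ?_)
    rw [Set.uIoc_of_le hle, Set.mem_Ioc, div_lt_iff₀ hs, le_div_iff₀ hs] at hy
    push_cast at hy
    have hceil : ⌈(N : ℝ) / 3 + Real.sqrt N * y⌉ = (n : ℤ) := by
      rw [Int.ceil_eq_iff]
      push_cast
      constructor <;> linarith
    rw [latticeCeil, hceil]
    push_cast
    rfl
  rw [hcongr, intervalIntegral.integral_const, gaussWeight, gaussDensity, smul_eq_mul,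
    Real.sqrt_mul Real.pi_pos.le, div_pow, Real.sq_sqrt (Nat.cast_nonneg N)]
  have hexp : -9 * (((n : ℝ) - N / 3) ^ 2 / N) = -(9 / N) * ((n : ℝ) - N / 3) ^ 2 := by ring
  rw [hexp]
  push_cast
  field_simp
  ring

lemma tendsto_sum_gaussWeight :
    Tendsto (fun N ↦ ∑ n ∈ Finset.range (N + 1), gaussWeight N n) atTop (𝓝 1) := by
  let I : ℕ → Set ℝ := fun N ↦
    Set.Ioc ((-1 - (N : ℝ) / 3) / Real.sqrt N) (((N : ℝ) - N / 3) / Real.sqrt N)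
  have hlim : Tendsto
      (fun N ↦ ∫ y, (I N).indicator (fun y ↦ gaussDensity (latticeCeil N y)) y) atTop (𝓝 1) := by
    rw [← integral_gaussDensity]
    refine tendsto_integral_filter_of_dominated_convergence
      (fun y ↦ 3 / Real.sqrt Real.pi * (Real.exp 9 * Real.exp (-(9 / 2) * y ^ 2))) ?_ ?_
      (((integrable_exp_neg_mul_sq (by norm_num)).const_mul _).const_mul _) ?_
    · exact Eventually.of_forall fun N ↦ ((continuous_gaussDensity.measurable.comp
        (measurable_latticeCeil N)).indicator measurableSet_Ioc).aestronglyMeasurable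
    · filter_upwards [eventually_gt_atTop 0] with N hN
      filter_upwards with y
      refine (norm_indicator_le_norm_self _ _).trans ?_
      rw [Real.norm_of_nonneg (by unfold gaussDensity; positivity)]
      exact gaussDensity_latticeCeil_le hN y
    · filter_upwards with y
      refine ((continuous_gaussDensity.tendsto y).comp (tendsto_latticeCeil y)).congr' ?_
      filter_upwards [eventually_gt_atTop 0,
        tendsto_sqrt_natCast.eventually_gt_atTop (3 * |y|)] with N hN hy
      have hs : 0 < Real.sqrt N := by positivity
      have hsq : Real.sqrt N * Real.sqrt N = N := Real.mul_self_sqrt (Nat.cast_nonneg N)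
      have hmem : y ∈ I N := by
        simp only [I, Set.mem_Ioc, div_lt_iff₀ hs, le_div_iff₀ hs]
        constructor
        · nlinarith [neg_abs_le y]
        · nlinarith [le_abs_self y]
      simp [Set.indicator_of_mem hmem]
  refine hlim.congr' ?_
  filter_upwards [eventually_gt_atTop 0] with N hN
  rw [sum_gaussWeight_eq hN, integral_indicator measurableSet_Ioc,
    intervalIntegral.integral_of_le]
  gcongr
  linarith [(Nat.cast_nonneg N : (0 : ℝ) ≤ N)]

/-- The continuous function that agrees with the expansion `Φ + N^{-1/2} Λ_N` to the right of `0`: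
the fractional parts are replaced by their arguments. -/
def psiGerm (N : ℕ) (w : ℝ) : ℝ :=
  stdCDF w + -Real.sqrt (3 / 2) * stdPhi w *
    (∑ n ∈ Finset.range (N + 1), gaussWeight N n * (w * Real.sqrt (2 * n) - 1 / 2)) / Real.sqrt N

lemma continuous_psiGerm (N : ℕ) : Continuous (psiGerm N) := by
  unfold psiGerm
  have h₁ := continuous_stdPhi
  have h₂ := continuous_stdCDF
  fun_prop

lemma stdCDF_add_Lambda_eq_psiGerm {N : ℕ} {w : ℝ} (hw : 0 ≤ w)
    (hwN : w * Real.sqrt (2 * N) < 1) :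
    stdCDF w + Lambda N w / Real.sqrt N = psiGerm N w := by
  rw [psiGerm, Lambda]
  congr 3
  refine Finset.sum_congr rfl fun n hn ↦ ?_
  have hn' : n ≤ N := by simpa [Nat.lt_succ_iff] using hn
  rw [gaussWeight, Int.fract_eq_self.2 ⟨by positivity, lt_of_le_of_lt (by gcongr) hwN⟩]

lemma eventually_mul_sqrt_lt_one (N : ℕ) {x : ℝ} (hx : x * Real.sqrt (2 * N) < 1) :
    ∀ᶠ w in 𝓝 x, w * Real.sqrt (2 * N) < 1 :=
  (by fun_prop : Continuous fun w : ℝ ↦ w * Real.sqrt (2 * N)).continuousAt.eventually_lt_const hx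

lemma leftLim_Psi_zero (N : ℕ) : Function.leftLim (Psi N) 0 = 1 - psiGerm N 0 := by
  refine leftLim_eq_of_tendsto ?_
  have hlim : Tendsto (fun w ↦ 1 - psiGerm N (-w)) (𝓝[<] 0) (𝓝 (1 - psiGerm N 0)) := by
    have hc : Continuous fun w ↦ 1 - psiGerm N (-w) := by
      have h := continuous_psiGerm N
      fun_prop
    simpa using (hc.tendsto 0).mono_left nhdsWithin_le_nhds
  refine hlim.congr' ?_
  have hneg : ∀ᶠ w : ℝ in 𝓝 0, -w * Real.sqrt (2 * N) < 1 :=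
    (by fun_prop : Continuous fun w : ℝ ↦ -w * Real.sqrt (2 * N)).continuousAt.eventually_lt_const
      (by simp)
  filter_upwards [self_mem_nhdsWithin, nhdsWithin_le_nhds hneg] with w hw hwN
  have hw' : w < 0 := hw
  have hpos : 0 < -w := by linarith
  rw [Psi, if_neg hw'.not_ge]
  congr 1
  symm
  refine leftLim_eq_of_tendsto ?_
  refine (((continuous_psiGerm N).tendsto (-w)).congr' ?_).mono_left nhdsWithin_le_nhds
  filter_upwards [eventually_gt_nhds hpos, eventually_mul_sqrt_lt_one N hwN] with x hx hxN
  exact (stdCDF_add_Lambda_eq_psiGerm hx.le hxN).symm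

lemma Psi_zero (N : ℕ) : Psi N 0 = psiGerm N 0 := by
  rw [Psi, if_pos le_rfl, stdCDF_add_Lambda_eq_psiGerm le_rfl (by simp)]

lemma sqrt_mul_jump {N : ℕ} (hN : 0 < N) :
    Real.sqrt N * (Psi N 0 - Function.leftLim (Psi N) 0) =
      Real.sqrt (3 / (4 * Real.pi)) * ∑ n ∈ Finset.range (N + 1), gaussWeight N n := by
  have hs : 0 < Real.sqrt N := by positivity
  have hconst : Real.sqrt (3 / (4 * Real.pi)) = Real.sqrt (3 / 2) * stdPhi 0 := by
    rw [show 3 / (4 * Real.pi) = 3 / 2 / (2 * Real.pi) by field_simp; norm_num,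
      Real.sqrt_div (by norm_num)]
    simp [stdPhi, div_eq_mul_inv]
  rw [leftLim_Psi_zero, Psi_zero, psiGerm, stdCDF_zero, hconst]
  simp only [zero_mul, zero_sub, ← Finset.sum_mul]
  field_simp
  ring

theorem statement5 :
    Tendsto (fun N : ℕ ↦ Real.sqrt N * (Psi N 0 - Function.leftLim (Psi N) 0)) atTop
      (nhds (Real.sqrt (3 / (4 * Real.pi)))) := by
  have h := tendsto_sum_gaussWeight.const_mul (Real.sqrt (3 / (4 * Real.pi)))
  rw [mul_one] at h
  refine h.congr' ?_
  filter_upwards [eventually_gt_atTop 0] with N hN using (sqrt_mul_jump hN).symm
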